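/- arXiv:2208.02054 — 2 statements merged into one kernel-verified Lean document; each statement's English description precedes it below -/
import Mathlib

section
/- Let N ≥ 1 and let a_1, …, a_N be real numbers with a_1 = 1 such that ∑_{j=1}^{N} a_j·cos((2j−1)t) ≥ 0 for all t ∈ [0, π/2]. If equality ∑_{j=1}^{N} (−1)^{j+1} a_j = 1/(2·cos²(π/(2N+2))) holds, then for every j = 1, …, N one has a_j = a⁰_j, where a⁰_j = ((N−j+2)·sin(πj/(N+1)) − (N−j+1)·sin(π(j−1)/(N+1))) / ((N+1)·sin(π/(N+1))). -/
open Real Finset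

/-!
One has `∑ a_j cos ((2j - 1)t) = cos t * P (2t)`, where `P` is a cosine polynomial of degree less
than `N` whose Fourier coefficients `b_k` are the alternating tails of `a`. Thus `P` is nonnegative,
and equality in the problem for `a` is equality in Fejér's inequality `b₁ ≤ b₀ cos (π / (N + 1))`.

That inequality comes from applying the quadrature rule with nodes `x_m = (2m + 1)π / (N + 1)` to
`P (x) * (cos (π / (N + 1)) - cos x)`. Equality forces `P`, and by nonnegativity also `P'`, to
vanish at every node except `± π / (N + 1)`. The discrete Fourier transforms of `P` and `P'` on the
nodes are thus known up to one factor each, and they equal, again up to a factor,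
`b_k - b_{N+1-k}` and `k b_k + (N + 1 - k) b_{N+1-k}`, which determine `b_k`.
-/

/-- The `m`-th node of the midpoint rule with `M` subintervals on `[0, 2π]`. -/
noncomputable def midpointNode (M m : ℕ) : ℝ := (2 * m + 1) * (π / M)

lemma midpointNode_zero (n : ℕ) : midpointNode (n + 1) 0 = π / (n + 1) := by
  simp [midpointNode]

lemma midpointNode_last (n : ℕ) : midpointNode (n + 1) n = 2 * π - π / (n + 1) := by
  rw [midpointNode]
  push_cast
  field_simp
  ring

lemma cos_lt_cos_of_lt_of_lt_two_pi_sub {x y : ℝ} (hx : 0 ≤ x) (hxy : x < y)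
    (hy : y < 2 * π - x) : cos y < cos x := by
  have hsub : 0 < sin ((y - x) / 2) := sin_pos_of_pos_of_lt_pi (by linarith) (by linarith)
  have hadd : 0 < sin ((y + x) / 2) := sin_pos_of_pos_of_lt_pi (by linarith) (by linarith)
  rw [← sub_neg, cos_sub_cos]
  nlinarith [mul_pos hadd hsub]

lemma cos_midpointNode_lt {n m : ℕ} (hm : 0 < m) (hmn : m < n) :
    cos (midpointNode (n + 1) m) < cos (π / (n + 1)) := by
  have hstep : 0 < π / (n + 1) := by positivity
  have hm' : (1 : ℝ) ≤ m := by exact_mod_cast hm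
  have hmn' : (m : ℝ) + 1 ≤ n := by exact_mod_cast hmn
  apply cos_lt_cos_of_lt_of_lt_two_pi_sub hstep.le
  · rw [← midpointNode_zero, midpointNode, midpointNode]
    push_cast
    nlinarith
  · rw [← midpointNode_last, midpointNode, midpointNode]
    push_cast
    nlinarith

lemma cos_midpointNode_le {n m : ℕ} (hmn : m ≤ n) :
    cos (midpointNode (n + 1) m) ≤ cos (π / (n + 1)) := by
  rcases m.eq_zero_or_pos with rfl | hm
  · rw [midpointNode_zero]
  rcases hmn.eq_or_lt with rfl | hlt
  · rw [midpointNode_last, cos_two_pi_sub]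
  · exact (cos_midpointNode_lt hm hlt).le

lemma sum_midpointNode_eq_add {n : ℕ} (hn : 0 < n) {f : ℝ → ℝ}
    (hf : ∀ m, 0 < m → m < n → f (midpointNode (n + 1) m) = 0) :
    ∑ m ∈ range (n + 1), f (midpointNode (n + 1) m) =
      f (π / (n + 1)) + f (2 * π - π / (n + 1)) := by
  rw [← midpointNode_last, ← midpointNode_zero]
  exact sum_eq_add_of_mem (f := fun m ↦ f (midpointNode (n + 1) m)) 0 n (by simp) (by simp)
    hn.ne fun m hm hne ↦ hf m (by omega) (by grind)

section Orthogonality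

lemma sum_cos_int_mul_midpointNode_of_not_dvd {M : ℕ} {k : ℤ} (hk : ¬ (M : ℤ) ∣ k) :
    ∑ m ∈ range M, cos (k * midpointNode M m) = 0 := by
  rcases M.eq_zero_or_pos with rfl | hM
  · simp
  have hfreq (l : ℤ) : 2 * k * (π / M) ≠ l * (2 * π) := by
    intro h
    field_simp at h
    exact hk ⟨l, by exact_mod_cast h⟩
  have hnum : (M : ℝ) * (2 * k * (π / M)) / 2 = k * π := by field_simp
  have hsum := sum_cos M hfreq (k * (π / M))
  rw [hnum, sin_int_mul_pi, zero_mul, zero_div] at hsum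
  rw [← hsum]
  refine sum_congr rfl fun m _ ↦ congrArg cos ?_
  rw [midpointNode]
  ring

lemma sum_cos_natCast_self_mul_midpointNode (M : ℕ) :
    ∑ m ∈ range M, cos (M * midpointNode M m) = -M := by
  rcases M.eq_zero_or_pos with rfl | hM
  · simp
  have hcos (m : ℕ) : cos (M * midpointNode M m) = -1 := by
    rw [← cos_nat_mul_two_pi_add_pi m, midpointNode]
    congr 1
    field_simp
  simp [hcos]

lemma sum_cos_mul_midpointNode {M k : ℕ} (hk : 0 < k) (hkM : k < M) :
    ∑ m ∈ range M, cos (k * midpointNode M m) = 0 := by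
  have h := sum_cos_int_mul_midpointNode_of_not_dvd (M := M) (k := k)
    (by exact_mod_cast Nat.not_dvd_of_pos_of_lt hk hkM)
  exact_mod_cast h

variable {M k l : ℕ}

lemma sum_cos_sub_midpointNode (hk : k < M) (hl : l < M) :
    ∑ m ∈ range M, cos (l * midpointNode M m - k * midpointNode M m) =
      if l = k then (M : ℝ) else 0 := by
  split_ifs with hlk
  · simp [hlk]
  have h := sum_cos_int_mul_midpointNode_of_not_dvd (M := M) (k := l - k) fun hdvd ↦
    hlk (by have := Int.eq_zero_of_abs_lt_dvd hdvd (by rw [abs_lt]; omega); omega)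
  simpa [sub_mul] using h

lemma sum_cos_add_midpointNode (hk : 0 < k) (hkM : k < M) (hl : l < M) :
    ∑ m ∈ range M, cos (l * midpointNode M m + k * midpointNode M m) =
      if l = M - k then -(M : ℝ) else 0 := by
  simp only [← add_mul]
  split_ifs with hlk
  · rw [← sum_cos_natCast_self_mul_midpointNode, hlk, Nat.cast_sub hkM.le, sub_add_cancel]
  have h := sum_cos_int_mul_midpointNode_of_not_dvd (M := M) (k := l + k) fun hdvd ↦ by
    have := Int.eq_zero_of_abs_lt_dvd (m := M) (x := l + k - M)
      (dvd_sub_self_right.2 hdvd) (by rw [abs_lt]; omega)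
    omega
  exact_mod_cast h

lemma sum_two_mul_cos_mul_cos_midpointNode (hk : 0 < k) (hkM : k < M) (hl : l < M) :
    ∑ m ∈ range M, 2 * cos (l * midpointNode M m) * cos (k * midpointNode M m) =
      (if l = k then (M : ℝ) else 0) - if l = M - k then (M : ℝ) else 0 := by
  simp only [two_mul_cos_mul_cos, sum_add_distrib, sum_cos_sub_midpointNode hkM hl,
    sum_cos_add_midpointNode hk hkM hl]
  split_ifs <;> ring

lemma sum_two_mul_sin_mul_sin_midpointNode (hk : 0 < k) (hkM : k < M) (hl : l < M) :
    ∑ m ∈ range M, 2 * sin (l * midpointNode M m) * sin (k * midpointNode M m) =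
      (if l = k then (M : ℝ) else 0) + if l = M - k then (M : ℝ) else 0 := by
  simp only [two_mul_sin_mul_sin, sum_sub_distrib, sum_cos_sub_midpointNode hkM hl,
    sum_cos_add_midpointNode hk hkM hl]
  split_ifs <;> ring

end Orthogonality

/-- The cosine polynomial of degree at most `n` with Fourier coefficients `b`, that is
`∑_{|k| ≤ n} b_{|k|} exp (ikx)`; this normalization is the reason for the factor `2`. -/
noncomputable def cosPoly (n : ℕ) (b : ℕ → ℝ) (x : ℝ) : ℝ :=
  b 0 + 2 * ∑ k ∈ Icc 1 n, b k * cos (k * x)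

section CosPoly

variable (n : ℕ) (b : ℕ → ℝ)

lemma deriv_cosPoly (x : ℝ) :
    deriv (cosPoly n b) x = -2 * ∑ k ∈ Icc 1 n, k * b k * sin (k * x) := by
  have hterm (k : ℕ) : HasDerivAt (fun y ↦ b k * cos (k * y)) (b k * (-sin (k * x) * (k * 1))) x :=
    ((hasDerivAt_id x).const_mul (k : ℝ)).cos.const_mul (b k)
  have hsum := ((HasDerivAt.fun_sum fun k (_ : k ∈ Icc 1 n) ↦ hterm k).const_mul 2).const_add (b 0)
  refine hsum.deriv.trans ?_
  rw [mul_sum, mul_sum]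
  exact sum_congr rfl fun k _ ↦ by ring

lemma cosPoly_congr_cos {x y : ℝ} (h : cos x = cos y) : cosPoly n b x = cosPoly n b y := by
  have hcos (k : ℕ) : cos (k * x) = cos (k * y) := by
    have hT (z : ℝ) : (Polynomial.Chebyshev.T ℝ k).eval (cos z) = cos (k * z) :=
      mod_cast Polynomial.Chebyshev.T_real_cos z k
    rw [← hT, ← hT, h]
  simp only [cosPoly, hcos]

lemma cosPoly_two_pi_sub (x : ℝ) : cosPoly n b (2 * π - x) = cosPoly n b x :=
  cosPoly_congr_cos n b (cos_two_pi_sub x)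

lemma deriv_cosPoly_two_pi_sub (x : ℝ) :
    deriv (cosPoly n b) (2 * π - x) = -deriv (cosPoly n b) x := by
  simp only [deriv_cosPoly, mul_sub, sin_nat_mul_two_pi_sub, mul_neg, sum_neg_distrib]

variable {n b}

lemma cosPoly_nonneg_of_forall_mem_Ico (h : ∀ x ∈ Set.Ico 0 π, 0 ≤ cosPoly n b x) (x : ℝ) :
    0 ≤ cosPoly n b x := by
  have hcont : Continuous (cosPoly n b) := by
    unfold cosPoly
    fun_prop
  have hIcc : Set.Icc 0 π ⊆ {y | 0 ≤ cosPoly n b y} := by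
    rw [← closure_Ico pi_ne_zero.symm]
    exact closure_minimal h (isClosed_le continuous_const hcont)
  rw [cosPoly_congr_cos n b (cos_arccos (neg_one_le_cos x) (cos_le_one x)).symm]
  exact hIcc ⟨arccos_nonneg _, arccos_le_pi _⟩

lemma cosPoly_nonneg_of_cos_mul_nonneg
    (h : ∀ t ∈ Set.Icc 0 (π / 2), 0 ≤ cos t * cosPoly n b (2 * t)) (x : ℝ) :
    0 ≤ cosPoly n b x := by
  refine cosPoly_nonneg_of_forall_mem_Ico (fun y ⟨hy0, hyπ⟩ ↦ ?_) x
  have hcos : 0 < cos (y / 2) := cos_pos_of_mem_Ioo ⟨by linarith, by linarith⟩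
  have hmul := h (y / 2) ⟨by linarith, by linarith⟩
  rw [mul_div_cancel₀ y two_ne_zero] at hmul
  exact nonneg_of_mul_nonneg_right hmul hcos

variable (n b)

lemma sum_cosPoly_midpointNode :
    ∑ m ∈ range (n + 1), cosPoly n b (midpointNode (n + 1) m) = (n + 1) * b 0 := by
  have hzero : ∑ k ∈ Icc 1 n, ∑ m ∈ range (n + 1), b k * cos (k * midpointNode (n + 1) m) = 0 := by
    refine sum_eq_zero fun k hk ↦ ?_
    rw [mem_Icc] at hk
    rw [← mul_sum, sum_cos_mul_midpointNode hk.1 (by omega), mul_zero]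
  simp only [cosPoly]
  rw [sum_add_distrib, ← mul_sum, sum_comm, hzero]
  simp

variable {k : ℕ} (hk : 0 < k) (hkn : k ≤ n)
include hk hkn

lemma sum_cosPoly_mul_cos_midpointNode :
    ∑ m ∈ range (n + 1), cosPoly n b (midpointNode (n + 1) m) * cos (k * midpointNode (n + 1) m) =
      (n + 1) * (b k - b (n + 1 - k)) := by
  have hterm : ∀ l ∈ Icc 1 n, ∑ m ∈ range (n + 1), 2 * (b l * cos (l * midpointNode (n + 1) m)) *
      cos (k * midpointNode (n + 1) m) = b l * ((if l = k then ((n + 1 : ℕ) : ℝ) else 0) -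
        if l = n + 1 - k then ((n + 1 : ℕ) : ℝ) else 0) := by
    intro l hl
    rw [← sum_two_mul_cos_mul_cos_midpointNode hk (by omega) (by grind), mul_sum]
    exact sum_congr rfl fun m _ ↦ by ring
  simp only [cosPoly, add_mul, sum_add_distrib, ← mul_sum,
    sum_cos_mul_midpointNode hk (Nat.lt_succ_of_le hkn), mul_zero, zero_add]
  simp only [mul_sum, sum_mul]
  rw [sum_comm, sum_congr rfl hterm]
  simp only [mul_sub, mul_ite, mul_zero, sum_sub_distrib, sum_ite_eq']
  rw [if_pos (by grind), if_pos (by grind)]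
  push_cast
  ring

lemma sum_deriv_cosPoly_mul_sin_midpointNode :
    ∑ m ∈ range (n + 1), deriv (cosPoly n b) (midpointNode (n + 1) m) *
        sin (k * midpointNode (n + 1) m) =
      -((n + 1) * (k * b k + (n + 1 - k) * b (n + 1 - k))) := by
  have hterm : ∀ l ∈ Icc 1 n, ∑ m ∈ range (n + 1),
      -2 * (l * b l * sin (l * midpointNode (n + 1) m)) * sin (k * midpointNode (n + 1) m) =
        -(l * b l) * ((if l = k then ((n + 1 : ℕ) : ℝ) else 0) +
          if l = n + 1 - k then ((n + 1 : ℕ) : ℝ) else 0) := by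
    intro l hl
    rw [← sum_two_mul_sin_mul_sin_midpointNode hk (by omega) (by grind), mul_sum]
    exact sum_congr rfl fun m _ ↦ by ring
  simp only [deriv_cosPoly, mul_sum, sum_mul]
  rw [sum_comm, sum_congr rfl hterm]
  simp only [mul_add, mul_ite, mul_zero, sum_add_distrib, sum_ite_eq']
  rw [if_pos (by grind), if_pos (by grind), Nat.cast_sub (by omega)]
  push_cast
  ring

end CosPoly

/-- Equality in Fejér's inequality `b₁ ≤ b₀ cos (π / (n + 1))` for nonnegative cosine polynomials
of degree less than `n`; the degree bound is encoded as `b n = 0`. -/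
structure IsFejerExtremal (n : ℕ) (b : ℕ → ℝ) : Prop where
  nonneg : ∀ x, 0 ≤ cosPoly n b x
  top_eq_zero : b n = 0
  one_eq : b 1 = b 0 * cos (π / (n + 1))

namespace IsFejerExtremal

variable {n m k : ℕ} {b : ℕ → ℝ} (hb : IsFejerExtremal n b)
include hb

lemma cosPoly_midpointNode_eq_zero (hm : 0 < m) (hmn : m < n) :
    cosPoly n b (midpointNode (n + 1) m) = 0 := by
  have hnonneg : ∀ i ∈ range (n + 1), 0 ≤ cosPoly n b (midpointNode (n + 1) i) *
      (cos (π / (n + 1)) - cos (midpointNode (n + 1) i)) := fun i hi ↦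
    mul_nonneg (hb.nonneg _) (sub_nonneg.2 (cos_midpointNode_le (mem_range_succ_iff.1 hi)))
  have hsum : ∑ i ∈ range (n + 1), cosPoly n b (midpointNode (n + 1) i) *
      (cos (π / (n + 1)) - cos (midpointNode (n + 1) i)) = 0 := by
    have hcos := sum_cosPoly_mul_cos_midpointNode n b one_pos (by omega)
    simp only [Nat.cast_one, one_mul, Nat.add_sub_cancel, hb.top_eq_zero, hb.one_eq] at hcos
    simp only [mul_sub, sum_sub_distrib, ← sum_mul, sum_cosPoly_midpointNode, hcos]
    ring
  have hprod := (sum_eq_zero_iff_of_nonneg hnonneg).1 hsum m (mem_range.2 (by omega))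
  exact (mul_eq_zero.1 hprod).resolve_right (sub_pos.2 (cos_midpointNode_lt hm hmn)).ne'

lemma deriv_cosPoly_midpointNode_eq_zero (hm : 0 < m) (hmn : m < n) :
    deriv (cosPoly n b) (midpointNode (n + 1) m) = 0 := by
  have hmin : IsLocalMin (cosPoly n b) (midpointNode (n + 1) m) := .of_forall fun x ↦ by
    rw [hb.cosPoly_midpointNode_eq_zero hm hmn]
    exact hb.nonneg x
  exact hmin.deriv_eq_zero

lemma two_mul_cosPoly_eq (hn : 0 < n) : 2 * cosPoly n b (π / (n + 1)) = (n + 1) * b 0 := by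
  rw [← sum_cosPoly_midpointNode, sum_midpointNode_eq_add hn fun m ↦
    hb.cosPoly_midpointNode_eq_zero, cosPoly_two_pi_sub, two_mul]

lemma coeff_sub_coeff_reflect (hk : 0 < k) (hkn : k ≤ n) :
    b k - b (n + 1 - k) = b 0 * cos (k * (π / (n + 1))) := by
  have hn : 0 < n := hk.trans_le hkn
  have hsum := sum_cosPoly_mul_cos_midpointNode n b hk hkn
  rw [sum_midpointNode_eq_add (f := fun x ↦ cosPoly n b x * cos (k * x)) hn fun m hm hmn ↦ by
    rw [hb.cosPoly_midpointNode_eq_zero hm hmn, zero_mul]] at hsum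
  rw [cosPoly_two_pi_sub, mul_sub, cos_nat_mul_two_pi_sub] at hsum
  apply mul_left_cancel₀ (Nat.cast_add_one_ne_zero n : (n : ℝ) + 1 ≠ 0)
  linear_combination -hsum + cos (k * (π / (n + 1))) * hb.two_mul_cosPoly_eq hn

lemma weighted_coeff_add_coeff_reflect (hk : 0 < k) (hkn : k ≤ n) :
    (n + 1) * (k * b k + (n + 1 - k) * b (n + 1 - k)) =
      -2 * deriv (cosPoly n b) (π / (n + 1)) * sin (k * (π / (n + 1))) := by
  have hsum := sum_deriv_cosPoly_mul_sin_midpointNode n b hk hkn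
  rw [sum_midpointNode_eq_add (f := fun x ↦ deriv (cosPoly n b) x * sin (k * x))
    (hk.trans_le hkn) fun m hm hmn ↦ by
      rw [hb.deriv_cosPoly_midpointNode_eq_zero hm hmn, zero_mul]] at hsum
  rw [deriv_cosPoly_two_pi_sub, mul_sub, sin_nat_mul_two_pi_sub] at hsum
  linear_combination hsum

lemma neg_two_mul_deriv_cosPoly_mul_sin (hn : 0 < n) :
    -2 * deriv (cosPoly n b) (π / (n + 1)) * sin (π / (n + 1)) =
      (n + 1) * (b 0 * cos (π / (n + 1))) := by
  have h := hb.weighted_coeff_add_coeff_reflect one_pos hn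
  rw [Nat.add_sub_cancel, hb.top_eq_zero, hb.one_eq, Nat.cast_one, one_mul, one_mul] at h
  linear_combination -h

lemma mul_coeff_eq (hkn : k ≤ n) :
    (n + 1) * sin (π / (n + 1)) * b k =
      b 0 * (cos (π / (n + 1)) * sin (k * (π / (n + 1))) +
        (n + 1 - k) * sin (π / (n + 1)) * cos (k * (π / (n + 1)))) := by
  rcases k.eq_zero_or_pos with rfl | hk
  · simp only [Nat.cast_zero, zero_mul, sin_zero, cos_zero]
    ring
  apply mul_left_cancel₀ (Nat.cast_add_one_ne_zero n : (n : ℝ) + 1 ≠ 0)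
  linear_combination sin (π / (n + 1)) * hb.weighted_coeff_add_coeff_reflect hk hkn +
    sin (k * (π / (n + 1))) * hb.neg_two_mul_deriv_cosPoly_mul_sin (hk.trans_le hkn) +
    (n + 1) * (n + 1 - k) * sin (π / (n + 1)) * hb.coeff_sub_coeff_reflect hk hkn

lemma mul_coeff_add_coeff_succ_eq (hkn : k < n) :
    (n + 1) * sin (π / (n + 1)) * (b k + b (k + 1)) =
      b 0 * (1 + cos (π / (n + 1))) * ((n + 1 - k) * sin ((k + 1) * (π / (n + 1))) -
        (n - k) * sin (k * (π / (n + 1)))) := by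
  have hk := hb.mul_coeff_eq hkn.le
  have hk1 := hb.mul_coeff_eq (k := k + 1) hkn
  rw [Nat.cast_add_one, add_one_mul (k : ℝ), sin_add, cos_add] at hk1
  rw [add_one_mul (k : ℝ), sin_add]
  linear_combination hk + hk1 - b 0 * sin (k * (π / (n + 1))) * (n - k) *
    sin_sq_add_cos_sq (π / (n + 1))

end IsFejerExtremal

/-- The signed tail `a (k + 1) - a (k + 2) + ⋯ ± a N`. -/
def alternatingTail (N : ℕ) (a : ℕ → ℝ) (k : ℕ) : ℝ :=
  ∑ j ∈ Ioc k N, (-1) ^ (j + k + 1) * a j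

section AlternatingTail

variable (N : ℕ) (a : ℕ → ℝ)

lemma alternatingTail_zero : alternatingTail N a 0 = ∑ j ∈ Icc 1 N, (-1) ^ (j + 1) * a j := rfl

lemma alternatingTail_self : alternatingTail N a N = 0 := by
  simp [alternatingTail]

variable {N}

lemma alternatingTail_add_alternatingTail_succ {k : ℕ} (hk : k < N) :
    alternatingTail N a k + alternatingTail N a (k + 1) = a (k + 1) := by
  have hsign : ((-1 : ℝ)) ^ (k + 1 + k + 1) = 1 := Even.neg_one_pow ⟨k + 1, by ring⟩
  have hneg : alternatingTail N a (k + 1) =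
      -∑ j ∈ Ioc (k + 1) N, (-1) ^ (j + k + 1) * a j := by
    rw [alternatingTail, ← sum_neg_distrib]
    exact sum_congr rfl fun j _ ↦ by ring
  rw [hneg, alternatingTail, ← insert_Ioc_add_one_left_eq_Ioc hk, sum_insert (by simp), hsign]
  ring

end AlternatingTail

lemma sum_mul_cos_odd_eq_cos_mul_cosPoly {n : ℕ} {a b : ℕ → ℝ}
    (hab : ∀ k < n, b k + b (k + 1) = a (k + 1)) (t : ℝ) :
    ∑ j ∈ Icc 1 n, a j * cos ((2 * (j : ℝ) - 1) * t) =
      cos t * cosPoly n b (2 * t) - b n * cos ((2 * n + 1) * t) := by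
  unfold cosPoly
  induction n with
  | zero =>
    simp only [Nat.lt_one_iff, Icc_eq_empty_of_lt, sum_empty, Nat.cast_zero]
    ring_nf
  | succ n ih =>
    have hlow : (2 * (n : ℝ) + 1) * t = (n + 1 : ℕ) * (2 * t) - t := by push_cast; ring
    have hmid : (2 * ((n + 1 : ℕ) : ℝ) - 1) * t = (n + 1 : ℕ) * (2 * t) - t := by ring
    have hhigh : (2 * ((n + 1 : ℕ) : ℝ) + 1) * t = (n + 1 : ℕ) * (2 * t) + t := by ring
    rw [sum_Icc_succ_top (by omega), sum_Icc_succ_top (by omega),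
      ih fun k hk ↦ hab k (by omega), ← hab n (by omega), hlow, hmid, hhigh, cos_sub, cos_add]
    ring

lemma sin_pi_div_add_one_pos {n : ℕ} (hn : 0 < n) : 0 < sin (π / (n + 1)) := by
  have hn' : (0 : ℝ) < n := by exact_mod_cast hn
  exact sin_pos_of_pos_of_lt_pi (by positivity) (div_lt_self pi_pos (by linarith))

lemma one_div_two_mul_cos_sq_mul_one_add_cos {n : ℕ} (hn : 0 < n) :
    1 / (2 * cos (π / (2 * n + 2)) ^ 2) * (1 + cos (π / (n + 1))) = 1 := by
  have hn' : (0 : ℝ) < n := by exact_mod_cast hn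
  have hpos : 0 < cos (π / (2 * n + 2)) := by
    apply cos_pos_of_mem_Ioo ⟨(neg_neg_of_pos pi_div_two_pos).trans (by positivity), ?_⟩
    exact div_lt_div_of_pos_left pi_pos two_pos (by linarith)
  have hdouble : 2 * (π / (2 * (n : ℝ) + 2)) = π / (n + 1) := by field_simp
  have hcos : 1 + cos (π / (n + 1)) = 2 * cos (π / (2 * n + 2)) ^ 2 := by
    rw [cos_sq, hdouble]
    ring
  rw [hcos, one_div_mul_cancel (by positivity)]

lemma isFejerExtremal_alternatingTail {N : ℕ} (hN : 0 < N) {a : ℕ → ℝ}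
    (hpos : ∀ t ∈ Set.Icc (0 : ℝ) (π / 2),
      0 ≤ ∑ j ∈ Icc 1 N, a j * cos ((2 * (j : ℝ) - 1) * t))
    (hval : alternatingTail N a 0 * (1 + cos (π / (N + 1))) = a 1) :
    IsFejerExtremal N (alternatingTail N a) where
  nonneg := cosPoly_nonneg_of_cos_mul_nonneg fun t ht ↦ by
    have hfactor := sum_mul_cos_odd_eq_cos_mul_cosPoly
      (fun k (hk : k < N) ↦ alternatingTail_add_alternatingTail_succ a hk) t
    rw [alternatingTail_self, zero_mul, sub_zero] at hfactor
    exact hfactor ▸ hpos t ht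
  top_eq_zero := alternatingTail_self N a
  one_eq := by
    have hadd := alternatingTail_add_alternatingTail_succ a hN
    rw [zero_add] at hadd
    linear_combination hadd - hval

theorem extremizer_unique (N : ℕ) (hN : 1 ≤ N) (a : ℕ → ℝ)
    (ha1 : a 1 = 1)
    (hpos : ∀ t ∈ Set.Icc (0 : ℝ) (π / 2),
      0 ≤ ∑ j ∈ Finset.Icc 1 N, a j * Real.cos ((2 * (j : ℝ) - 1) * t))
    (heq : ∑ j ∈ Finset.Icc 1 N, (-1 : ℝ) ^ (j + 1) * a j =
      1 / (2 * Real.cos (π / (2 * N + 2)) ^ 2)) :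
    ∀ j ∈ Finset.Icc 1 N, a j =
      (((N : ℝ) - j + 2) * Real.sin (π * j / (N + 1)) -
        ((N : ℝ) - j + 1) * Real.sin (π * (j - 1) / (N + 1))) /
      ((N + 1) * Real.sin (π / (N + 1))) := by
  intro j hj
  obtain ⟨k, rfl⟩ := Nat.exists_eq_add_of_le' (Finset.mem_Icc.1 hj).1
  have hk : k < N := (Finset.mem_Icc.1 hj).2
  have hval : alternatingTail N a 0 * (1 + cos (π / (N + 1))) = 1 := by
    rw [alternatingTail_zero, heq, one_div_two_mul_cos_sq_mul_one_add_cos hN]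
  have hb : IsFejerExtremal N (alternatingTail N a) :=
    isFejerExtremal_alternatingTail hN hpos (hval.trans ha1.symm)
  have hcoeff := hb.mul_coeff_add_coeff_succ_eq hk
  rw [alternatingTail_add_alternatingTail_succ a hk, hval, one_mul] at hcoeff
  have hsin := sin_pi_div_add_one_pos hN
  have hangle : π * ((k + 1 : ℕ) : ℝ) / (N + 1) = (k + 1) * (π / (N + 1)) := by push_cast; ring
  have hangle' : π * (((k + 1 : ℕ) : ℝ) - 1) / (N + 1) = k * (π / (N + 1)) := by push_cast; ring
  rw [eq_div_iff (by positivity), hangle, hangle']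
  push_cast
  linear_combination hcoeff
end

section
/- Let N ≥ 1 and let F⁰(z) = ∑_{j=1}^{N} a⁰_j z^{2j−1} with a⁰_j = ((N−j+2)·sin(πj/(N+1)) − (N−j+1)·sin(π(j−1)/(N+1)))/((N+1)·sin(π/(N+1))). Then for every complex z with z⁴ − 2z²·cos(π/(N+1)) + 1 ≠ 0, F⁰(z) = −z(z²−1)/(z⁴ − 2z²·cos(π/(N+1)) + 1) + 4·sin²(π/(2N+2))·z³(z²+1)(z^{2N+2}+1) / ((N+1)·(z⁴ − 2z²·cos(π/(N+1)) + 1)²). -/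
open Real Finset

/-!
With `θ = π / (N + 1)`, dividing each sine in the coefficients by `sin θ` turns them into values
`U_j(cos θ)` of the Chebyshev polynomials of the second kind, so that `(N + 1) F⁰(z) = z P(z²)` with
`P(w) = ∑ j < N, ((N + 1 - j) U_j - (N - j) U_{j-1}) w ^ j`. Multiplying by the denominator
`D = w² - 2 w cos θ + 1` of the generating function of the `U_j` makes the unweighted and the
linearly weighted sums collapse. Summation by parts writes `P` as `1 - w` times a weighted sum plus
`1 + w` times the unweighted sum `S`. In `D P` the total coefficient of `S` is then
`(1 + w) (D - (1 - w)²) = 2 (1 - cos θ) w (1 + w)`, which is where the split form comes from. The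
end terms simplify because `U_N(cos θ) = 0` and `U_{N-1}(cos θ) = 1`.
-/

section ChebyshevSums

open Polynomial.Chebyshev

variable {R : Type*} [CommRing R]

lemma eval_chebyshevU_add_one (n : ℤ) (x : R) :
    (U R (n + 1)).eval x = 2 * x * (U R n).eval x - (U R (n - 1)).eval x := by
  simp [U_add_one]

lemma quadratic_mul_sum_chebyshevU (x w : R) (n : ℕ) :
    (w ^ 2 - 2 * x * w + 1) * ∑ j ∈ range n, (U R j).eval x * w ^ j =
      1 - (U R n).eval x * w ^ n + (U R (n - 1)).eval x * w ^ (n + 1) := by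
  induction n with
  | zero => simp
  | succ n ih =>
    rw [sum_range_succ, mul_add, ih]
    simp only [Nat.cast_succ, add_sub_cancel_right, eval_chebyshevU_add_one]
    ring

lemma quadratic_mul_sum_sub_mul_chebyshevU (x w m : R) (n : ℕ) :
    (w ^ 2 - 2 * x * w + 1) * ∑ j ∈ range n, (m - j) * (U R j).eval x * w ^ j =
      m + 1 + (w ^ 2 - 1) * ∑ j ∈ range n, (U R j).eval x * w ^ j
        - (m + 1 - n) * (U R n).eval x * w ^ n
        + (m - n) * (U R (n - 1)).eval x * w ^ (n + 1) := by
  induction n with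
  | zero => simp
  | succ n ih =>
    rw [sum_range_succ, mul_add, ih, sum_range_succ]
    simp only [Nat.cast_succ, add_sub_cancel_right, eval_chebyshevU_add_one]
    ring

lemma sum_linear_weight_sub_shift (u : ℤ → R) (hu : u (-1) = 0) (w m : R) (n : ℕ) :
    ∑ j ∈ range n, ((m + 1 - j) * u j - (m - j) * u (j - 1)) * w ^ j =
      (1 - w) * ∑ j ∈ range n, (m - j) * u j * w ^ j
        + (1 + w) * ∑ j ∈ range n, u j * w ^ j + (m - n) * u (n - 1) * w ^ n := by
  induction n with
  | zero => simp [hu]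
  | succ n ih =>
    simp only [sum_range_succ, ih, Nat.cast_succ, add_sub_cancel_right]
    ring

/-- The polynomial `P` with `(N + 1) F⁰(z) = z P(z²)`, at `w`, where `x` stands for
`cos (π / (N + 1))` and `n` for `N`. Chebyshev indices are integers, so that `U_{-1} = 0` occurs in
the constant term. -/
noncomputable def extremalChebyshevSum (n : ℕ) (x w : R) : R :=
  ∑ j ∈ range n, ((n + 1 - j) * (U R j).eval x - (n - j) * (U R (j - 1)).eval x) * w ^ j

lemma quadratic_mul_extremalChebyshevSum (n : ℕ) (x w : R) :
    (w ^ 2 - 2 * x * w + 1) * extremalChebyshevSum n x w =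
      (1 - w) * (n + 1 - (U R n).eval x * w ^ n)
        + 2 * (1 - x) * w * (1 + w) * ∑ j ∈ range n, (U R j).eval x * w ^ j := by
  have by_parts := sum_linear_weight_sub_shift (fun j ↦ (U R j).eval x) (by simp) w n n
  have weighted := quadratic_mul_sum_sub_mul_chebyshevU x w n n
  rw [extremalChebyshevSum, by_parts]
  linear_combination (1 - w) * weighted

lemma quadratic_sq_mul_extremalChebyshevSum {n : ℕ} {x : R} (hn : (U R n).eval x = 0)
    (hpred : (U R (n - 1)).eval x = 1) (w : R) :
    (w ^ 2 - 2 * x * w + 1) ^ 2 * extremalChebyshevSum n x w =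
      (n + 1) * (1 - w) * (w ^ 2 - 2 * x * w + 1)
        + 2 * (1 - x) * w * (1 + w) * (1 + w ^ (n + 1)) := by
  have weighted := quadratic_mul_extremalChebyshevSum n x w
  have unweighted := quadratic_mul_sum_chebyshevU x w n
  rw [hn] at weighted unweighted
  rw [hpred] at unweighted
  linear_combination (w ^ 2 - 2 * x * w + 1) * weighted + 2 * (1 - x) * w * (1 + w) * unweighted

lemma extremalChebyshevSum_eq_div_add_div {K : Type*} [Field K] {n : ℕ} {x w : K}
    (hn : (U K n).eval x = 0) (hpred : (U K (n - 1)).eval x = 1)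
    (hD : w ^ 2 - 2 * x * w + 1 ≠ 0) :
    extremalChebyshevSum n x w =
      (n + 1) * (1 - w) / (w ^ 2 - 2 * x * w + 1)
        + 2 * (1 - x) * w * (1 + w) * (1 + w ^ (n + 1)) / (w ^ 2 - 2 * x * w + 1) ^ 2 := by
  have cleared := quadratic_sq_mul_extremalChebyshevSum hn hpred w
  generalize w ^ 2 - 2 * x * w + 1 = D at *
  field_simp
  linear_combination cleared

end ChebyshevSums

section Trigonometry

open Polynomial.Chebyshev

lemma sin_pi_div_add_one_ne_zero {n : ℕ} (hn : 1 ≤ n) : sin (π / (n + 1)) ≠ 0 := by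
  have one_lt : (1 : ℝ) < n + 1 := by exact_mod_cast Nat.lt_succ_of_le hn
  exact (sin_pos_of_pos_of_lt_pi (by positivity) (div_lt_self pi_pos one_lt)).ne'

lemma eval_chebyshevU_cos_pi_div_add_one {n : ℕ} (hn : 1 ≤ n) :
    (U ℝ n).eval (cos (π / (n + 1))) = 0 := by
  have sine_form := U_real_cos (π / (n + 1)) n
  rw [Int.cast_natCast, mul_div_cancel₀ _ (by positivity), sin_pi] at sine_form
  exact (mul_eq_zero.mp sine_form).resolve_right (sin_pi_div_add_one_ne_zero hn)

lemma eval_chebyshevU_sub_one_cos_pi_div_add_one {n : ℕ} (hn : 1 ≤ n) :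
    (U ℝ (n - 1)).eval (cos (π / (n + 1))) = 1 := by
  have sine_form := U_real_cos (π / (n + 1)) (n - 1)
  have reflected : ((n - 1 : ℤ) + 1 : ℝ) * (π / (n + 1)) = π - π / (n + 1) := by
    push_cast
    field_simp
    ring
  rw [reflected, sin_pi_sub] at sine_form
  exact mul_eq_right₀ (sin_pi_div_add_one_ne_zero hn) |>.mp sine_form

lemma four_mul_sin_sq_pi_div (n : ℕ) :
    4 * sin (π / (2 * n + 2)) ^ 2 = 2 * (1 - cos (π / (n + 1))) := by
  have double : 2 * (π / (2 * n + 2)) = π / (n + 1) := by field_simp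
  rw [sin_sq_eq_half_sub, double]
  ring

/-- The coefficient `a⁰_j` of `z ^ (2 j - 1)` in `F⁰`, for `1 ≤ j ≤ N`. -/
noncomputable def extremalCoeff (N j : ℕ) : ℝ :=
  (((N : ℝ) - j + 2) * sin (π * j / (N + 1)) - ((N : ℝ) - j + 1) * sin (π * (j - 1) / (N + 1))) /
    ((N + 1) * sin (π / (N + 1)))

lemma extremalCoeff_add_one {N : ℕ} (hN : 1 ≤ N) (j : ℕ) :
    extremalCoeff N (j + 1) =
      ((N + 1 - j) * (U ℝ j).eval (cos (π / (N + 1)))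
        - (N - j) * (U ℝ (j - 1)).eval (cos (π / (N + 1)))) / (N + 1) := by
  have sin_ne := sin_pi_div_add_one_ne_zero hN
  have sin_succ : sin (π * (j + 1) / (N + 1)) =
      (U ℝ j).eval (cos (π / (N + 1))) * sin (π / (N + 1)) := by
    rw [U_real_cos, Int.cast_natCast]
    ring_nf
  have sin_self : sin (π * j / (N + 1)) =
      (U ℝ (j - 1)).eval (cos (π / (N + 1))) * sin (π / (N + 1)) := by
    rw [U_real_cos, Int.cast_sub, Int.cast_natCast, Int.cast_one, sub_add_cancel]
    ring_nf
  rw [extremalCoeff, Nat.cast_succ, add_sub_cancel_right, sin_succ, sin_self]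
  field_simp
  ring

lemma sum_extremalCoeff_mul_pow {N : ℕ} (hN : 1 ≤ N) (z : ℂ) :
    ∑ j ∈ Icc 1 N, (extremalCoeff N j : ℂ) * z ^ (2 * j - 1) =
      z * extremalChebyshevSum N (cos (π / (N + 1)) : ℂ) (z ^ 2) / (N + 1) := by
  rw [← Ico_add_one_right_eq_Icc, sum_Ico_eq_sum_range, Nat.add_sub_cancel, extremalChebyshevSum,
    mul_sum, sum_div]
  refine sum_congr rfl fun j _ ↦ ?_
  have exponent : 2 * (1 + j) - 1 = 2 * j + 1 := by omega
  rw [exponent, add_comm 1 j, extremalCoeff_add_one hN, pow_succ, pow_mul]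
  push_cast
  ring

end Trigonometry

theorem extremal_poly_closed_form_split (N : ℕ) (hN : 1 ≤ N) (a0 : ℕ → ℝ)
    (ha0 : ∀ j, a0 j =
      (((N : ℝ) - j + 2) * Real.sin (π * j / (N + 1)) -
        ((N : ℝ) - j + 1) * Real.sin (π * (j - 1) / (N + 1))) /
      ((N + 1) * Real.sin (π / (N + 1))))
    (z : ℂ)
    (hz : z ^ 4 - 2 * z ^ 2 * (Real.cos (π / (N + 1)) : ℂ) + 1 ≠ 0) :
    ∑ j ∈ Finset.Icc 1 N, (a0 j : ℂ) * z ^ (2 * j - 1) =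
      -(z * (z ^ 2 - 1)) / (z ^ 4 - 2 * z ^ 2 * (Real.cos (π / (N + 1)) : ℂ) + 1) +
      4 * (Real.sin (π / (2 * N + 2)) : ℂ) ^ 2 *
        (z ^ 3 * (z ^ 2 + 1) * (z ^ (2 * N + 2) + 1)) /
        ((N + 1) * (z ^ 4 - 2 * z ^ 2 * (Real.cos (π / (N + 1)) : ℂ) + 1) ^ 2) := by
  obtain rfl : a0 = extremalCoeff N := funext ha0
  have root : (Polynomial.Chebyshev.U ℂ N).eval (cos (π / (N + 1)) : ℂ) = 0 := by
    exact_mod_cast congrArg Complex.ofReal (eval_chebyshevU_cos_pi_div_add_one hN)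
  have pred_eq_one : (Polynomial.Chebyshev.U ℂ (N - 1)).eval (cos (π / (N + 1)) : ℂ) = 1 := by
    exact_mod_cast congrArg Complex.ofReal (eval_chebyshevU_sub_one_cos_pi_div_add_one hN)
  have half_angle : 4 * (sin (π / (2 * N + 2)) : ℂ) ^ 2 = 2 * (1 - cos (π / (N + 1))) := by
    exact_mod_cast congrArg Complex.ofReal (four_mul_sin_sq_pi_div N)
  have denominator : (z ^ 2) ^ 2 - 2 * (cos (π / (N + 1)) : ℂ) * z ^ 2 + 1 =
      z ^ 4 - 2 * z ^ 2 * (cos (π / (N + 1)) : ℂ) + 1 := by ring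
  have N_ne : (N : ℂ) + 1 ≠ 0 := Nat.cast_add_one_ne_zero N
  rw [sum_extremalCoeff_mul_pow hN, half_angle,
    extremalChebyshevSum_eq_div_add_div root pred_eq_one (denominator ▸ hz), denominator]
  generalize z ^ 4 - 2 * z ^ 2 * (cos (π / (N + 1)) : ℂ) + 1 = D at *
  field_simp
  ring
end
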